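/- Fix n ≥ 1. In the n+1 variables x_1, …, x_{n+1}, for 1 ≤ i ≤ n let h_i be the tropical polynomial x ↦ min(2x_i, x_i, 1) and let g_i be the tropical polynomial x ↦ min(2x_i, x_i, 1, 1 + x_{n+1}). Then ⋂_{i=1}^n T(g_i) ∩ ⋂_{i=1}^n T(h_i) = (({0,1}^n \ {(0,…,0)}) × [0, ∞)) ∪ ({(0,…,0)} × [−1, ∞)), where a pair (v, t) with v ∈ ℝ^n and t ∈ ℝ denotes the point (v_1, …, v_n, t) ∈ ℝ^{n+1}. -/

import Mathlib

open Finset Pointwise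

/-- The affine-linear function given by a tropical term with coefficient `c`
and exponent vector `α`. -/
def tropTerm {n : ℕ} (c : ℝ) (α : Fin n → ℕ) (x : Fin n → ℝ) : ℝ :=
  c + ∑ j, (α j : ℝ) * x j

/-- The tropical hypersurface of the tropical polynomial with support `A`
and coefficients `c`: the set of points where the minimum of the terms is
attained at least twice. -/
def tropHyp {n : ℕ} (A : Finset (Fin n → ℕ)) (c : (Fin n → ℕ) → ℝ) :
    Set (Fin n → ℝ) :=
  {x | ∃ α ∈ A, ∃ β ∈ A, α ≠ β ∧
    tropTerm (c α) α x = tropTerm (c β) β x ∧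
    ∀ γ ∈ A, tropTerm (c α) α x ≤ tropTerm (c γ) γ x}

/-- A tropical polynomial: a (finite) support of exponent vectors, and coefficients. -/
structure TropPoly (n : ℕ) where
  supp : Finset (Fin n → ℕ)
  coeff : (Fin n → ℕ) → ℝ

def TropPoly.hyp {n : ℕ} (f : TropPoly n) : Set (Fin n → ℝ) :=
  tropHyp f.supp f.coeff

/-- Tropical product of two tropical polynomials. -/
noncomputable def TropPoly.mul {n : ℕ} (f g : TropPoly n) : TropPoly n where
  supp := f.supp + g.supp
  coeff := fun γ =>
    sInf {r | ∃ α ∈ f.supp, ∃ β ∈ g.supp, α + β = γ ∧ r = f.coeff α + g.coeff β}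

/-- The tropical multiplicative unit (the constant polynomial `0`). -/
def TropPoly.one (n : ℕ) : TropPoly n := ⟨{0}, fun _ => 0⟩

/-- Tropical product of a list of tropical polynomials. -/
noncomputable def TropPoly.listProd {n : ℕ} (l : List (TropPoly n)) : TropPoly n :=
  l.foldr TropPoly.mul (TropPoly.one n)

/-- The exponent vector `k · e_i`. -/
def single {n : ℕ} (i : Fin n) (k : ℕ) : Fin n → ℕ :=
  fun j => if j = i then k else 0

theorem rp_term {n : ℕ} (c : ℝ) (i : Fin n) (k : ℕ) (x : Fin n → ℝ) :
    tropTerm c (single i k) x = c + k * x i := by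
  simp [tropTerm, single]

theorem rp_term0 {n : ℕ} (c : ℝ) (x : Fin n → ℝ) :
    tropTerm c 0 x = c := by
  simp [tropTerm]

theorem rp_ne0 {n : ℕ} (i : Fin n) (k : ℕ) (hk : k ≠ 0) : single i k ≠ 0 := by
  intro h
  have := congrFun h i
  simp [single] at this
  exact hk this

theorem rp_ne21 {n : ℕ} (i : Fin n) : single i 2 ≠ single i 1 := by
  intro h
  have := congrFun h i
  simp [single] at this

theorem rp_nel {n : ℕ} (i : Fin n) (k : ℕ) (hk : k ≠ 0) :
    single (Fin.castSucc i) k ≠ single (Fin.last n) 1 := by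
  intro h
  have := congrFun h (Fin.castSucc i)
  simp [single, (Fin.castSucc_lt_last i).ne] at this
  exact hk this

theorem rp_h {n : ℕ} (i : Fin n) (x : Fin (n + 1) → ℝ) :
    x ∈ tropHyp
        ({single (Fin.castSucc i) 2, single (Fin.castSucc i) 1,
          (0 : Fin (n + 1) → ℕ)} : Finset (Fin (n + 1) → ℕ))
        (fun α => if α = 0 then (1 : ℝ) else 0) ↔
      x (Fin.castSucc i) = 0 ∨ x (Fin.castSucc i) = 1 := by
  have a1 := rp_ne0 (Fin.castSucc i) 1 (by norm_num)
  have a2 := rp_ne0 (Fin.castSucc i) 2 (by norm_num)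
  have a3 := rp_ne21 (Fin.castSucc i)
  simp only [tropHyp, Set.mem_setOf_eq, Finset.mem_insert, Finset.mem_singleton,
    exists_eq_or_imp, exists_eq_left, forall_eq_or_imp, forall_eq, a1, a2, a3, a1.symm, a2.symm,
    a3.symm, if_true, if_false, rp_term, rp_term0, ne_eq, not_true_eq_false, not_false_eq_true,
    false_and, true_and, false_or, or_false]
  push_cast
  generalize x (Fin.castSucc i) = u
  constructor
  · rintro ((h | h) | (h | h) | (h | h)) <;>
    first
    | (left; linarith)
    | (right; linarith)
    | (exfalso; linarith)
  · rintro (rfl | rfl) <;> norm_num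

theorem rp_g {n : ℕ} (i : Fin n) (x : Fin (n + 1) → ℝ)
    (hx : x (Fin.castSucc i) = 0 ∨ x (Fin.castSucc i) = 1) :
    x ∈ tropHyp
        ({single (Fin.castSucc i) 2, single (Fin.castSucc i) 1,
          single (Fin.last n) 1, (0 : Fin (n + 1) → ℕ)} : Finset (Fin (n + 1) → ℕ))
        (fun α => if α = 0 then (1 : ℝ)
          else if α = single (Fin.last n) 1 then 1 else 0) ↔
      x (Fin.castSucc i) - 1 ≤ x (Fin.last n) := by
  have a1 := rp_ne0 (Fin.castSucc i) 1 (by norm_num)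
  have a2 := rp_ne0 (Fin.castSucc i) 2 (by norm_num)
  have a3 := rp_ne21 (Fin.castSucc i)
  have a4 := rp_ne0 (Fin.last n) 1 (by norm_num)
  have a5 := rp_nel i 1 (by norm_num)
  have a6 := rp_nel i 2 (by norm_num)
  simp only [tropHyp, Set.mem_setOf_eq, Finset.mem_insert, Finset.mem_singleton,
    exists_eq_or_imp, exists_eq_left, forall_eq_or_imp, forall_eq, a1, a2, a3, a1.symm, a2.symm,
    a3.symm, a4, a4.symm, a5, a5.symm, a6, a6.symm,
    if_true, if_false, rp_term, rp_term0, ne_eq, not_true_eq_false, not_false_eq_true,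
    false_and, true_and, false_or, or_false]
  push_cast
  generalize x (Fin.castSucc i) = u at *
  generalize x (Fin.last n) = t at *
  constructor
  · intro h
    rcases hx with rfl | rfl <;> rcases h with (h | h | h) | (h | h | h) | (h | h | h) | (h | h | h) <;>
      linarith
  · intro h
    rcases hx with rfl | rfl
    · left; left
      refine ⟨?_, ?_, ?_, ?_, ?_⟩ <;> linarith
    · right; left; right; right
      refine ⟨?_, ?_, ?_, ?_, ?_⟩ <;> linarith

/-- In the `n+1` variables `x₁, …, x_{n+1}`, with
`hᵢ = min (2xᵢ) xᵢ 1` and `gᵢ = min (2xᵢ) xᵢ 1 (1 + x_{n+1})` for `1 ≤ i ≤ n`,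
the intersection `⋂ᵢ T(gᵢ) ∩ ⋂ᵢ T(hᵢ)` is the union of the upward half rays
`({0,1}ⁿ \ {0}) × [0,∞)` and `{0} × [-1,∞)`. -/
theorem ray_prevariety (n : ℕ) (hn : 1 ≤ n) :
    ((⋂ i : Fin n, tropHyp
        ({single (Fin.castSucc i) 2, single (Fin.castSucc i) 1,
          single (Fin.last n) 1, (0 : Fin (n + 1) → ℕ)} : Finset (Fin (n + 1) → ℕ))
        (fun α => if α = 0 then (1 : ℝ)
          else if α = single (Fin.last n) 1 then 1 else 0)) ∩
      ⋂ i : Fin n, tropHyp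
        ({single (Fin.castSucc i) 2, single (Fin.castSucc i) 1,
          (0 : Fin (n + 1) → ℕ)} : Finset (Fin (n + 1) → ℕ))
        (fun α => if α = 0 then (1 : ℝ) else 0))
      = {x : Fin (n + 1) → ℝ |
          ((∀ j : Fin n, x (Fin.castSucc j) = 0 ∨ x (Fin.castSucc j) = 1) ∧
            (∃ j : Fin n, x (Fin.castSucc j) ≠ 0) ∧ 0 ≤ x (Fin.last n)) ∨
          ((∀ j : Fin n, x (Fin.castSucc j) = 0) ∧ -1 ≤ x (Fin.last n))} := by
  ext x
  simp only [Set.mem_inter_iff, Set.mem_iInter, Set.mem_setOf_eq, rp_h]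
  constructor
  · rintro ⟨hg, hh⟩
    have hg' := fun i => (rp_g i x (hh i)).1 (hg i)
    by_cases h0 : ∀ j : Fin n, x (Fin.castSucc j) = 0
    · right
      refine ⟨h0, ?_⟩
      have := hg' ⟨0, hn⟩
      rw [h0] at this
      linarith
    · left
      push Not at h0
      refine ⟨hh, h0, ?_⟩
      obtain ⟨j, hj⟩ := h0
      have h1 := (hh j).resolve_left hj
      have := hg' j
      rw [h1] at this
      linarith
  · rintro (⟨h, -, ht⟩ | ⟨h, ht⟩)
    · refine ⟨fun i => (rp_g i x (h i)).2 ?_, h⟩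
      rcases h i with h | h <;> rw [h] <;> linarith
    · refine ⟨fun i => (rp_g i x (Or.inl (h i))).2 ?_, fun i => Or.inl (h i)⟩
      rw [h i]; linarith
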